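/- Let (M,d) be a cone metric space over a real Banach space E with cone P (with nonempty interior), and let T, S : M → M be maps such that T is continuous and injective. Suppose S is of class D_T(a,b) with constants a, b ≥ 0 and b < 1, and suppose p ∈ M is a fixed point of S (S p = p). Then for every sequence (x_n) in M converging to p, the sequence (T S x_n) converges to T p = T S p in (M,d); that is, for every c ∈ E with 0 ≪ c there exists N such that d(T S x_n, T p) ≪ c for all n ≥ N. (The paper phrases this as: S is continuous at p.) -/

import Mathlib

open Filter

section ConeMetricDefs

variable {E : Type*} [NormedAddCommGroup E] [NormedSpace ℝ E]

/-- `P` is a cone in the real Banach space `E`. -/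
def IsCone (P : Set E) : Prop :=
  P.Nonempty ∧ IsClosed P ∧ P ≠ {0} ∧
    (∀ a b : ℝ, 0 ≤ a → 0 ≤ b → ∀ x y : E, x ∈ P → y ∈ P → a • x + b • y ∈ P) ∧
    (∀ x : E, x ∈ P → -x ∈ P → x = 0)

/-- `x ≤ y` with respect to the cone `P`, i.e. `y - x ∈ P`. -/
def ConeLe (P : Set E) (x y : E) : Prop := y - x ∈ P

/-- `x ≪ y` with respect to the cone `P`, i.e. `y - x ∈ interior P`. -/
def ConeLt (P : Set E) (x y : E) : Prop := y - x ∈ interior P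

/-- `d` is a cone metric on `M` with respect to the cone `P ⊆ E`. -/
def IsConeMetric (P : Set E) {M : Type*} (d : M → M → E) : Prop :=
  (∀ x y : M, ConeLe P 0 (d x y)) ∧
  (∀ x y : M, d x y = 0 ↔ x = y) ∧
  (∀ x y : M, d x y = d y x) ∧
  (∀ x y z : M, ConeLe P (d x y) (d x z + d z y))

/-- The sequence `x` converges to `l` in the cone metric space `(M, d)`. -/
def ConeSeqTendsto (P : Set E) {M : Type*} (d : M → M → E) (x : ℕ → M) (l : M) : Prop :=
  ∀ c : E, ConeLt P 0 c → ∃ N : ℕ, ∀ n ≥ N, ConeLt P (d (x n) l) c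

/-- The sequence `x` is a Cauchy sequence in the cone metric space `(M, d)`. -/
def ConeSeqCauchy (P : Set E) {M : Type*} (d : M → M → E) (x : ℕ → M) : Prop :=
  ∀ c : E, ConeLt P 0 c → ∃ N : ℕ, ∀ m ≥ N, ∀ n ≥ N, ConeLt P (d (x m) (x n)) c

/-- The cone metric space `(M, d)` is complete. -/
def ConeComplete (P : Set E) {M : Type*} (d : M → M → E) : Prop :=
  ∀ x : ℕ → M, ConeSeqCauchy P d x → ∃ l, ConeSeqTendsto P d x l

/-- `T : M → M` is (sequentially) continuous on the cone metric space `(M, d)`. -/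
def ConeContinuous (P : Set E) {M : Type*} (d : M → M → E) (T : M → M) : Prop :=
  ∀ (x : ℕ → M) (l : M), ConeSeqTendsto P d x l →
    ConeSeqTendsto P d (fun n => T (x n)) (T l)

/-- `T : M → M` is subsequentially convergent: whenever `(T yₙ)` converges,
`(yₙ)` has a convergent subsequence. -/
def ConeSubseqConvergent (P : Set E) {M : Type*} (d : M → M → E) (T : M → M) : Prop :=
  ∀ y : ℕ → M, (∃ l, ConeSeqTendsto P d (fun n => T (y n)) l) →
    ∃ φ : ℕ → ℕ, StrictMono φ ∧ ∃ l, ConeSeqTendsto P d (fun n => y (φ n)) l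

/-- `T : M → M` is sequentially convergent: whenever `(T yₙ)` converges,
`(yₙ)` converges. -/
def ConeSeqConvergent (P : Set E) {M : Type*} (d : M → M → E) (T : M → M) : Prop :=
  ∀ y : ℕ → M, (∃ l, ConeSeqTendsto P d (fun n => T (y n)) l) →
    ∃ l, ConeSeqTendsto P d y l

/-- `S` is of class `D_T(a, b)`:
`d(TSx, TSy) ≤ a • d(Tx, Ty) + b • (d(Tx, TSx) + d(Ty, TSy))` for all `x, y`. -/
def IsClassDT (P : Set E) {M : Type*} (d : M → M → E) (T S : M → M) (a b : ℝ) : Prop :=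
  ∀ x y : M, ConeLe P (d (T (S x)) (T (S y)))
    (a • d (T x) (T y) + b • (d (T x) (T (S x)) + d (T y) (T (S y))))

end ConeMetricDefs

/-!
The triangle inequality `d(Tx, TSx) ≤ d(Tx, Tp) + d(TSx, Tp)` turns the class `D_T(a, b)` condition
at the pair `(x, p)` into `d(TSx, Tp) ≤ (a + b) • d(Tx, Tp) + b • d(TSx, Tp)`. As `b < 1`, the last
term can be absorbed on the left, so `d(TSx, Tp)` is dominated by a fixed multiple of `d(Tx, Tp)`.
-/

section Interior

open scoped Pointwise

variable {E : Type*} [AddCommGroup E] [TopologicalSpace E]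

theorem add_mem_interior_of_mem {σ : Type*} [SetLike σ E] [AddMemClass σ E]
    [ContinuousConstVAdd E E] {C : σ} {x y : E} (hx : x ∈ interior (C : Set E)) (hy : y ∈ C) :
    x + y ∈ interior (C : Set E) := by
  have hadd : (C : Set E) + C ⊆ C := Set.add_subset_iff.2 fun _ hu _ hv => add_mem hu hv
  exact interior_mono hadd (subset_interior_add_left (Set.add_mem_add hx hy))

theorem smul_mem_interior_convexCone [Module ℝ E] [ContinuousConstSMul ℝ E] {C : ConvexCone ℝ E}
    {r : ℝ} (hr : 0 < r) {x : E} (hx : x ∈ interior (C : Set E)) :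
    r • x ∈ interior (C : Set E) := by
  have hsmul : r • (C : Set E) ⊆ C := Set.smul_set_subset_iff.2 fun _ hu => C.smul_mem hr hu
  refine interior_mono hsmul ?_
  rw [interior_smul₀ hr.ne']
  exact Set.smul_mem_smul_set hx

end Interior

section ConeOrder

variable {E : Type*} [NormedAddCommGroup E] [NormedSpace ℝ E] {C : PointedCone ℝ E}
  {r s : ℝ} {u v w : E}

/-- A cone in the sense of `IsCone`, bundled as a Mathlib `PointedCone`, whose underlying set is
definitionally `P`. In Mathlib "pointed" means `0 ∈ P`, not `P ∩ -P = {0}`. -/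
def IsCone.toPointedCone {P : Set E} (hP : IsCone P) : PointedCone ℝ E :=
  PointedCone.ofConeComb P hP.1 fun x hx y hy r hr s hs =>
    hP.2.2.2.1 r s hr hs x y hx hy

theorem ConeLe.trans (huv : ConeLe (C : Set E) u v) (hvw : ConeLe (C : Set E) v w) :
    ConeLe (C : Set E) u w := by
  simpa only [ConeLe, SetLike.mem_coe, sub_add_sub_cancel] using add_mem hvw huv

theorem ConeLe.trans_coneLt (huv : ConeLe (C : Set E) u v) (hvw : ConeLt (C : Set E) v w) :
    ConeLt (C : Set E) u w := by
  simpa only [ConeLt, sub_add_sub_cancel] using add_mem_interior_of_mem hvw huv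

instance : Trans (ConeLe (C : Set E)) (ConeLe (C : Set E)) (ConeLe (C : Set E)) :=
  ⟨ConeLe.trans⟩

instance : Trans (ConeLe (C : Set E)) (ConeLt (C : Set E)) (ConeLt (C : Set E)) :=
  ⟨ConeLe.trans_coneLt⟩

theorem ConeLe.add_left {P : Set E} (huv : ConeLe P u v) (w : E) :
    ConeLe P (w + u) (w + v) := by
  simpa only [ConeLe, add_sub_add_left_eq_sub] using huv

theorem ConeLe.smul (hr : 0 ≤ r) (huv : ConeLe (C : Set E) u v) :
    ConeLe (C : Set E) (r • u) (r • v) := by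
  simpa only [ConeLe, SetLike.mem_coe, smul_sub] using C.smul_mem hr huv

theorem ConeLe.smul_le_smul_of_nonneg_right (hrs : r ≤ s) (hu : ConeLe (C : Set E) 0 u) :
    ConeLe (C : Set E) (r • u) (s • u) := by
  simpa only [ConeLe, SetLike.mem_coe, sub_zero, sub_smul] using C.smul_mem (sub_nonneg.2 hrs) hu

theorem ConeLt.smul (hr : 0 < r) (huv : ConeLt (C : Set E) u v) :
    ConeLt (C : Set E) (r • u) (r • v) := by
  rw [ConeLt, ← smul_sub]
  exact smul_mem_interior_convexCone (C := C.toConvexCone) hr huv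

theorem ConeLe.le_div_smul_of_le_smul_add_smul (hs : s < 1)
    (h : ConeLe (C : Set E) v (r • u + s • v)) : ConeLe (C : Set E) v ((r / (1 - s)) • u) := by
  have hpos : 0 < 1 - s := sub_pos.2 hs
  have habsorbed : ConeLe (C : Set E) ((1 - s) • v) (r • u) := by
    rw [ConeLe] at h ⊢
    convert h using 1
    module
  simpa only [smul_smul, inv_mul_cancel₀ hpos.ne', one_smul, inv_mul_eq_div]
    using habsorbed.smul (inv_nonneg.2 hpos.le)

end ConeOrder

section ConeMetric

variable {E : Type*} [NormedAddCommGroup E] [NormedSpace ℝ E] {C : PointedCone ℝ E}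
  {M : Type*} {d : M → M → E}

theorem ConeSeqTendsto.of_coneLe_smul {M' : Type*} {d' : M' → M' → E} {x : ℕ → M} {l : M}
    {y : ℕ → M'} {l' : M'} {K : ℝ} (hd : IsConeMetric (C : Set E) d)
    (hx : ConeSeqTendsto (C : Set E) d x l)
    (hyx : ∀ n, ConeLe (C : Set E) (d' (y n) l') (K • d (x n) l)) :
    ConeSeqTendsto (C : Set E) d' y l' := by
  intro c hc
  have hL : 0 < |K| + 1 := by positivity
  have hKL : K ≤ |K| + 1 := (le_abs_self K).trans (le_add_of_nonneg_right zero_le_one)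
  have hc' : ConeLt (C : Set E) 0 ((|K| + 1)⁻¹ • c) := by
    simpa only [smul_zero] using hc.smul (inv_pos.2 hL)
  obtain ⟨N, hN⟩ := hx _ hc'
  refine ⟨N, fun n hn => ?_⟩
  calc
    ConeLe (C : Set E) (d' (y n) l') (K • d (x n) l) := hyx n
    ConeLe (C : Set E) _ ((|K| + 1) • d (x n) l) := .smul_le_smul_of_nonneg_right hKL (hd.1 _ _)
    ConeLt (C : Set E) _ ((|K| + 1) • (|K| + 1)⁻¹ • c) := (hN n hn).smul hL
    _ = c := smul_inv_smul₀ hL.ne' c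

theorem IsClassDT.coneLe_smul_of_fixedPoint {T S : M → M} {a b : ℝ} {p : M}
    (hS : IsClassDT (C : Set E) d T S a b) (hd : IsConeMetric (C : Set E) d)
    (hb : 0 ≤ b) (hb1 : b < 1) (hp : S p = p) (x : M) :
    ConeLe (C : Set E) (d (T (S x)) (T p)) (((a + b) / (1 - b)) • d (T x) (T p)) := by
  obtain ⟨-, eq_zero_iff, symm, triangle⟩ := hd
  have hclass : ConeLe (C : Set E) (d (T (S x)) (T p))
      (a • d (T x) (T p) + b • d (T x) (T (S x))) := by
    simpa only [hp, (eq_zero_iff (T p) (T p)).2 rfl, add_zero] using hS x p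
  have htriangle : ConeLe (C : Set E) (d (T x) (T (S x)))
      (d (T x) (T p) + d (T (S x)) (T p)) := by
    simpa only [symm (T p)] using triangle (T x) (T (S x)) (T p)
  refine ConeLe.le_div_smul_of_le_smul_add_smul hb1 ?_
  calc
    ConeLe (C : Set E) (d (T (S x)) (T p)) (a • d (T x) (T p) + b • d (T x) (T (S x))) := hclass
    ConeLe (C : Set E) _ (a • d (T x) (T p) + b • (d (T x) (T p) + d (T (S x)) (T p))) :=
      (htriangle.smul hb).add_left _
    _ = (a + b) • d (T x) (T p) + b • d (T (S x)) (T p) := by module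

end ConeMetric

theorem stmt6_general {E : Type*} [NormedAddCommGroup E] [NormedSpace ℝ E] {M : Type*}
    (C : PointedCone ℝ E) (d : M → M → E) (hd : IsConeMetric (C : Set E) d)
    (T S : M → M) (a b : ℝ) (hb : 0 ≤ b) (hb1 : b < 1) (hS : IsClassDT (C : Set E) d T S a b)
    (p : M) (hp : S p = p) (x : ℕ → M)
    (hx : ConeSeqTendsto (C : Set E) d (fun n => T (x n)) (T p)) :
    ConeSeqTendsto (C : Set E) d (fun n => T (S (x n))) (T p) :=
  hx.of_coneLe_smul hd fun n => hS.coneLe_smul_of_fixedPoint hd hb hb1 hp (x n)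

/-- if `S ∈ D_T(a,b)` with `b < 1` and `p` is a fixed point of
`S`, then for every sequence `(xₙ)` converging to `p` the sequence `(T S xₙ)`
converges to `T p` (i.e. `S` is continuous at `p`). -/
theorem stmt6 {E : Type*} [NormedAddCommGroup E] [NormedSpace ℝ E] [CompleteSpace E]
    {M : Type*} (P : Set E) (hP : IsCone P) (hPint : (interior P).Nonempty)
    (d : M → M → E) (hd : IsConeMetric P d)
    (T S : M → M) (hTcont : ConeContinuous P d T) (hTinj : Function.Injective T)
    (a b : ℝ) (ha : 0 ≤ a) (hb : 0 ≤ b) (hb1 : b < 1)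
    (hS : IsClassDT P d T S a b)
    (p : M) (hp : S p = p) :
    ∀ x : ℕ → M, ConeSeqTendsto P d x p →
      ConeSeqTendsto P d (fun n => T (S (x n))) (T p) :=
  fun x hx => stmt6_general hP.toPointedCone d hd T S a b hb hb1 hS p hp x
    (hTcont x p hx)
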